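/- The subgroup H = ⟨η₁, η₂⟩, where η₁ = σ₁σ₂ρ and η₂ = σ₂, has order 2m²n; consequently H acts simply transitively on the arcs of Γ (this is the rotational group of an orientable reflexible map of type {n, 2m} with skeleton Γ). -/

import Mathlib

/-- The lexicographic product `C_n[mK_1]`: vertices `(i,j)` with `(i₁,j₁) ~ (i₂,j₂)`
iff `i₂ = i₁ + 1` or `i₁ = i₂ + 1` (indices modulo `n`). -/
def lexCycle (n m : ℕ) : SimpleGraph (ZMod n × ZMod m) :=
  SimpleGraph.fromRel (fun u v => v.1 = u.1 + 1)

/-- The representative in `{1, …, n}` of `i` modulo `n`. -/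
def zrep {n : ℕ} (i : ZMod n) : ℕ := if i.val = 0 then n else i.val

section aux13

variable {n m : ℕ}

def wof (v : ZMod n × ZMod m) : ZMod m := (-1) ^ (zrep v.1) * (2 * v.2 - 1)

def IsP (c : ZMod n →+* ZMod m) (g : Equiv.Perm (ZMod n × ZMod m)) (t : ZMod n) (a b : ZMod m) : Prop :=
  ∀ v, (g v).1 = v.1 + t ∧ wof (g v) = wof v + a + b * c v.1

def IsN (c : ZMod n →+* ZMod m) (g : Equiv.Perm (ZMod n × ZMod m)) (t : ZMod n) (a b : ZMod m) : Prop :=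
  ∀ v, (g v).1 = t - v.1 ∧ wof (g v) = - wof v + a + b * c v.1

variable {c : ZMod n →+* ZMod m} {g g' : Equiv.Perm (ZMod n × ZMod m)}
  {t t' : ZMod n} {a b a' b' : ZMod m}

lemma IsP.one : IsP c 1 0 0 0 := fun v => by simp

lemma IsP.mul (h : IsP c g t a b) (h' : IsP c g' t' a' b') :
    IsP c (g * g') (t + t') (a + a' + b * c t') (b + b') := fun v => by
  have h1 := h (g' v)
  have h2 := h' v
  rw [Equiv.Perm.mul_apply, h1.1, h1.2, h2.1, h2.2, map_add]
  constructor <;> ring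

lemma IsP.mulN (h : IsP c g t a b) (h' : IsN c g' t' a' b') :
    IsN c (g * g') (t + t') (a + a' + b * c t') (b' - b) := fun v => by
  have h1 := h (g' v)
  have h2 := h' v
  rw [Equiv.Perm.mul_apply, h1.1, h1.2, h2.1, h2.2, map_sub]
  constructor <;> ring

lemma IsN.mulP (h : IsN c g t a b) (h' : IsP c g' t' a' b') :
    IsN c (g * g') (t - t') (a - a' + b * c t') (b - b') := fun v => by
  have h1 := h (g' v)
  have h2 := h' v
  rw [Equiv.Perm.mul_apply, h1.1, h1.2, h2.1, h2.2, map_add]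
  constructor <;> ring

lemma IsN.mul (h : IsN c g t a b) (h' : IsN c g' t' a' b') :
    IsP c (g * g') (t - t') (a - a' + b * c t') (-b - b') := fun v => by
  have h1 := h (g' v)
  have h2 := h' v
  rw [Equiv.Perm.mul_apply, h1.1, h1.2, h2.1, h2.2, map_sub]
  constructor <;> ring

lemma IsP.inv (h : IsP c g t a b) : IsP c g⁻¹ (-t) (-a + b * c t) (-b) := fun v => by
  have h1 := h (g⁻¹ v)
  rw [show g (g⁻¹ v) = v from g.apply_symm_apply v] at h1
  have h3 : (g⁻¹ v).1 = v.1 - t := by rw [h1.1]; ring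
  refine ⟨by rw [h3]; ring, ?_⟩
  rw [h1.2, h1.1, map_add]; ring

lemma IsN.inv (h : IsN c g t a b) : IsN c g⁻¹ t (a + b * c t) (-b) := fun v => by
  have h1 := h (g⁻¹ v)
  rw [show g (g⁻¹ v) = v from g.apply_symm_apply v] at h1
  refine ⟨by rw [h1.1]; ring, ?_⟩
  rw [h1.2, h1.1, map_sub]; ring

lemma IsP.pow0 (h : IsP c g 0 a b) (k : ℕ) : IsP c (g ^ k) 0 (k * a) (k * b) := by
  induction k with
  | zero => simpa using IsP.one
  | succ k ih =>
    have := ih.mul h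
    rw [← pow_succ] at this
    convert this using 1
    · simp
    · push_cast; rw [map_zero]; ring
    · push_cast; ring

lemma IsP.pow1 (h : IsP c g 1 a b) (k : ℕ) : ∃ a' b', IsP c (g ^ k) k a' b' := by
  induction k with
  | zero => exact ⟨0, 0, by simpa using IsP.one⟩
  | succ k ih =>
    obtain ⟨a', b', ih⟩ := ih
    have := ih.mul h
    rw [← pow_succ] at this
    exact ⟨_, _, by push_cast; exact this⟩

lemma wof_inj (h2 : IsUnit (2 : ZMod m)) {u v : ZMod n × ZMod m} (h : u.1 = v.1)
    (hw : wof u = wof v) : u = v := by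
  unfold wof at hw
  rw [h] at hw
  have hu : IsUnit ((-1 : ZMod m) ^ (zrep v.1)) := (isUnit_one.neg).pow _
  have h3 := hu.mul_left_cancel hw
  have h4 : 2 * u.2 = 2 * v.2 := by linear_combination h3
  exact Prod.ext h (h2.mul_left_cancel h4)

variable (c) in
lemma full (H : Subgroup (Equiv.Perm (ZMod n × ZMod m))) [NeZero n] [NeZero m]
    (h2 : IsUnit (2 : ZMod m)) {A B : Equiv.Perm (ZMod n × ZMod m)}
    (hA : A ∈ H) (hB : B ∈ H) (pA : IsP c A 1 (-2) 4) (pB : IsN c B 2 (-6) 4) :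
    (∀ t a b, ∃ g ∈ H, IsP c g t a b) ∧ (∀ t a b, ∃ g ∈ H, IsN c g t a b) := by
  have q1 : IsP c (B * B) 0 8 (-8) := by
    convert pB.mul pB using 1
    · ring
    · rw [map_ofNat]; ring
    · ring
  have q2 : IsP c (A⁻¹ * (B * B) * A) 0 0 (-8) := by
    convert (pA.inv.mul q1).mul pA using 1
    · ring
    · simp; ring
    · ring
  have q3 : IsP c ((B * B) * (A⁻¹ * (B * B) * A)⁻¹) 0 8 0 := by
    convert q1.mul q2.inv using 1
    · ring
    · simp
    · ring
  obtain ⟨d, hd⟩ : ∃ d : ZMod m, d * 8 = 1 := by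
    have : IsUnit (8 : ZMod m) := by
      have := h2.pow 3
      norm_num at this
      exact this
    exact this.exists_left_inv
  have hBB := H.mul_mem hB hB
  have hq2 := H.mul_mem (H.mul_mem (H.inv_mem hA) hBB) hA
  have hq3 := H.mul_mem hBB (H.inv_mem hq2)
  have T : ∀ a b, ∃ g ∈ H, IsP c g 0 a b := by
    intro a b
    refine ⟨_, H.mul_mem (H.pow_mem hq3 (d * a).val) (H.pow_mem hq2 (-(d * b)).val), ?_⟩
    convert (q3.pow0 (d * a).val).mul (q2.pow0 (-(d * b)).val) using 1
    · simp
    · simp only [ZMod.natCast_val, ZMod.cast_id, id]; simp; linear_combination -a * hd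
    · simp only [ZMod.natCast_val, ZMod.cast_id, id]; simp; linear_combination -b * hd
  have PP : ∀ t a b, ∃ g ∈ H, IsP c g t a b := by
    intro t a b
    obtain ⟨a', b', h⟩ := pA.pow1 t.val
    simp only [ZMod.natCast_val, ZMod.cast_id, id] at h
    obtain ⟨g, hg, hg'⟩ := T (a - a' - (b - b') * c t) (b - b')
    refine ⟨_, H.mul_mem hg (H.pow_mem hA t.val), ?_⟩
    convert hg'.mul h using 1 <;> ring
  refine ⟨PP, ?_⟩
  intro t a b
  obtain ⟨g, hg, hg'⟩ := PP (t - 2) (a + 6 - (4 - b) * c 2) (4 - b)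
  refine ⟨_, H.mul_mem hg hB, ?_⟩
  convert hg'.mulN pB using 1 <;> ring

variable (c) in
lemma closed {A B : Equiv.Perm (ZMod n × ZMod m)}
    (pA : IsP c A 1 (-2) 4) (pB : IsN c B 2 (-6) 4) (g) (hg : g ∈ Subgroup.closure {A, B}) :
    (∃ t a b, IsP c g t a b) ∨ (∃ t a b, IsN c g t a b) := by
  induction hg using Subgroup.closure_induction with
  | mem x hx =>
    rcases hx with rfl | rfl
    · exact Or.inl ⟨_, _, _, pA⟩
    · exact Or.inr ⟨_, _, _, pB⟩
  | one => exact Or.inl ⟨_, _, _, IsP.one⟩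
  | mul x y _ _ hx hy =>
    rcases hx with ⟨_, _, _, hx⟩ | ⟨_, _, _, hx⟩ <;> rcases hy with ⟨_, _, _, hy⟩ | ⟨_, _, _, hy⟩
    · exact Or.inl ⟨_, _, _, hx.mul hy⟩
    · exact Or.inr ⟨_, _, _, hx.mulN hy⟩
    · exact Or.inr ⟨_, _, _, hx.mulP hy⟩
    · exact Or.inl ⟨_, _, _, hx.mul hy⟩
  | inv x _ hx =>
    rcases hx with ⟨_, _, _, hx⟩ | ⟨_, _, _, hx⟩
    · exact Or.inl ⟨_, _, _, hx.inv⟩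
    · exact Or.inr ⟨_, _, _, hx.inv⟩

lemma adj_iff (h1 : (1 : ZMod n) ≠ 0) (u v : ZMod n × ZMod m) :
    (lexCycle n m).Adj u v ↔ ∃ d : ZMod n, (d = 1 ∨ d = -1) ∧ v.1 = u.1 + d := by
  unfold lexCycle
  rw [SimpleGraph.fromRel_adj]
  constructor
  · rintro ⟨_, h | h⟩
    · exact ⟨1, Or.inl rfl, h⟩
    · exact ⟨-1, Or.inr rfl, by rw [h]; ring⟩
  · rintro ⟨d, hd, h⟩
    refine ⟨?_, ?_⟩
    · rintro rfl
      have : d = 0 := by linear_combination -h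
      rcases hd with rfl | rfl
      · exact h1 this
      · exact h1 (neg_eq_zero.mp this)
    · rcases hd with rfl | rfl
      · exact Or.inl h
      · right; rw [h]; ring

variable (c) in
lemma trans13 (H : Subgroup (Equiv.Perm (ZMod n × ZMod m))) (h1 : (1 : ZMod n) ≠ 0)
    (h2 : IsUnit (2 : ZMod m))
    (hP : ∀ t a b, ∃ g ∈ H, IsP c g t a b) (hN : ∀ t a b, ∃ g ∈ H, IsN c g t a b)
    (u₁ w₁ u₂ w₂ : ZMod n × ZMod m)
    (e₁ : (lexCycle n m).Adj u₁ w₁) (e₂ : (lexCycle n m).Adj u₂ w₂) :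
    ∃ g ∈ H, g u₁ = u₂ ∧ g w₁ = w₂ := by
  rw [adj_iff h1] at e₁ e₂
  obtain ⟨d, hd, e₁⟩ := e₁
  obtain ⟨d', hd', e₂⟩ := e₂
  have hdd : c d * c d = 1 := by rcases hd with rfl | rfl <;> simp
  have key : d' = d ∨ d' = -d := by
    rcases hd with rfl | rfl <;> rcases hd' with rfl | rfl <;> simp
  rcases key with rfl | rfl
  · set b := c d' * ((wof w₂ - wof w₁) - (wof u₂ - wof u₁)) with hb
    obtain ⟨g, hg, h⟩ := hP (u₂.1 - u₁.1) (wof u₂ - wof u₁ - b * c u₁.1) b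
    refine ⟨g, hg, wof_inj h2 ?_ ?_, wof_inj h2 ?_ ?_⟩
    · rw [(h _).1]; ring
    · rw [(h _).2]; ring
    · rw [(h _).1, e₁, e₂]; ring
    · rw [(h _).2, e₁, map_add]
      linear_combination c d' * hb + ((wof w₂ - wof w₁) - (wof u₂ - wof u₁)) * hdd
  · set b := c d * ((wof w₂ + wof w₁) - (wof u₂ + wof u₁)) with hb
    obtain ⟨g, hg, h⟩ := hN (u₂.1 + u₁.1) (wof u₂ + wof u₁ - b * c u₁.1) b
    refine ⟨g, hg, wof_inj h2 ?_ ?_, wof_inj h2 ?_ ?_⟩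
    · rw [(h _).1]; ring
    · rw [(h _).2]; ring
    · rw [(h _).1, e₁, e₂]; ring
    · rw [(h _).2, e₁, map_add]
      linear_combination c d * hb + ((wof w₂ + wof w₁) - (wof u₂ + wof u₁)) * hdd

lemma free13 (h1 : (1 : ZMod n) ≠ 0) (h2n : (2 : ZMod n) ≠ 0)
    (h2 : IsUnit (2 : ZMod m))
    (hg : (∃ t a b, IsP c g t a b) ∨ (∃ t a b, IsN c g t a b))
    (u w : ZMod n × ZMod m)
    (e : (lexCycle n m).Adj u w) (hu : g u = u) (hw : g w = w) : g = 1 := by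
  rw [adj_iff h1] at e
  obtain ⟨d, hd, e⟩ := e
  have hdd : c d * c d = 1 := by rcases hd with rfl | rfl <;> simp
  rcases hg with ⟨t, a, b, h⟩ | ⟨t, a, b, h⟩
  · have k1 := h u
    have k2 := h w
    rw [hu] at k1
    rw [hw, e, map_add] at k2
    have ht : t = 0 := by linear_combination -k1.1
    have hb : b = 0 := by
      linear_combination -b * hdd - c d * k2.2 + c d * k1.2
    have ha : a = 0 := by
      have := k1.2
      rw [hb] at this
      linear_combination -this
    subst ht hb ha
    ext1 v
    refine wof_inj h2 ?_ ?_
    · rw [(h v).1]; simp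
    · rw [(h v).2]; simp
  · exfalso
    have k1 := (h u).1
    have k2 := (h w).1
    rw [hu] at k1
    rw [hw, e] at k2
    have : 2 * d = 0 := by linear_combination k2 - k1
    rcases hd with rfl | rfl
    · exact h2n (by linear_combination this)
    · exact h2n (by linear_combination -this)

lemma card13 (H : Subgroup (Equiv.Perm (ZMod n × ZMod m))) (h1 : (1 : ZMod n) ≠ 0)
    (h2n : (2 : ZMod n) ≠ 0)
    (hA : ∀ g ∈ H, ∀ u v, (lexCycle n m).Adj u v → (lexCycle n m).Adj (g u) (g v))
    (hT : ∀ u₁ w₁ u₂ w₂ : ZMod n × ZMod m,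
        (lexCycle n m).Adj u₁ w₁ → (lexCycle n m).Adj u₂ w₂ →
        ∃ g ∈ H, g u₁ = u₂ ∧ g w₁ = w₂)
    (hF : ∀ u w : ZMod n × ZMod m, (lexCycle n m).Adj u w →
        ∀ g ∈ H, g u = u → g w = w → g = 1) : Nat.card H = 2 * m ^ 2 * n := by
  have e0 : (lexCycle n m).Adj (0, 0) (1, 0) := (adj_iff h1 _ _).2 ⟨1, Or.inl rfl, by simp⟩
  let Arc := {p : (ZMod n × ZMod m) × (ZMod n × ZMod m) // (lexCycle n m).Adj p.1 p.2}
  let f : H → Arc := fun g => ⟨(g.1 (0, 0), g.1 (1, 0)), hA _ g.2 _ _ e0⟩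
  have hf : Function.Bijective f := by
    constructor
    · rintro ⟨g, hg⟩ ⟨g', hg'⟩ h
      have h : g (0, 0) = g' (0, 0) ∧ g (1, 0) = g' (1, 0) := Prod.mk.inj (congrArg Subtype.val h)
      have := hF _ _ e0 (g'⁻¹ * g) (H.mul_mem (H.inv_mem hg') hg)
        (by rw [Equiv.Perm.mul_apply, h.1]; exact g'.symm_apply_apply _)
        (by rw [Equiv.Perm.mul_apply, h.2]; exact g'.symm_apply_apply _)
      rw [inv_mul_eq_one] at this
      exact Subtype.ext this.symm
    · rintro ⟨⟨u, v⟩, h⟩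
      obtain ⟨g, hg, h3, h4⟩ := hT _ _ _ _ e0 h
      exact ⟨⟨g, hg⟩, Subtype.ext (Prod.ext h3 h4)⟩
  let k : Bool × (ZMod n × ZMod m) × ZMod m → Arc := fun x =>
    ⟨(x.2.1, (x.2.1.1 + (if x.1 then 1 else -1), x.2.2)), (adj_iff h1 _ _).2
      ⟨if x.1 then 1 else -1, by cases x.1 <;> simp, rfl⟩⟩
  have h11 : (1 : ZMod n) ≠ -1 := fun h => h2n (by linear_combination h)
  have hk : Function.Bijective k := by
    constructor
    · rintro ⟨b, u, j⟩ ⟨b', u', j'⟩ h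
      obtain ⟨h4, h5⟩ := Prod.mk.inj (congrArg Subtype.val h)
      obtain ⟨h3, h6⟩ := Prod.mk.inj h5
      change u = u' at h4
      subst h4 h6
      have h3 := add_left_cancel h3
      cases b <;> cases b' <;> simp [h11, h11.symm] at h3 ⊢
    · rintro ⟨⟨u, v⟩, h⟩
      obtain ⟨d, hd, h3⟩ := (adj_iff h1 _ _).1 h
      rcases hd with rfl | rfl
      · exact ⟨(true, u, v.2), Subtype.ext (Prod.ext rfl (Prod.ext (by simpa [k] using h3.symm) rfl))⟩
      · exact ⟨(false, u, v.2), Subtype.ext (Prod.ext rfl (Prod.ext (by simpa [k] using h3.symm) rfl))⟩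
  rw [Nat.card_eq_of_bijective f hf, ← Nat.card_eq_of_bijective k hk]
  simp only [Nat.card_prod, Nat.card_zmod]
  simp; ring

lemma adj13 (h1 : (1 : ZMod n) ≠ 0)
    (hg : (∃ t a b, IsP c g t a b) ∨ (∃ t a b, IsN c g t a b))
    (u v : ZMod n × ZMod m) (e : (lexCycle n m).Adj u v) : (lexCycle n m).Adj (g u) (g v) := by
  rw [adj_iff h1] at e ⊢
  obtain ⟨d, hd, e⟩ := e
  rcases hg with ⟨t, a, b, h⟩ | ⟨t, a, b, h⟩
  · refine ⟨d, hd, ?_⟩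
    rw [(h u).1, (h v).1, e]; ring
  · refine ⟨-d, ?_, ?_⟩
    · rcases hd with rfl | rfl <;> simp
    · rw [(h u).1, (h v).1, e]; ring

lemma zrep_spec [NeZero n] (i : ZMod n) : 1 ≤ zrep i ∧ zrep i ≤ n ∧ ((zrep i : ℕ) : ZMod n) = i := by
  have hn : 0 < n := Nat.pos_of_ne_zero (NeZero.ne n)
  unfold zrep
  split_ifs with h
  · refine ⟨hn, le_rfl, ?_⟩
    rw [ZMod.natCast_self]
    exact ((ZMod.val_eq_zero i).1 h).symm
  · exact ⟨Nat.pos_of_ne_zero h, (ZMod.val_lt i).le, by simp⟩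

lemma zrep_eq [NeZero n] (i : ZMod n) (k : ℕ) (h1 : 1 ≤ k) (h2 : k ≤ n) (h : (k : ZMod n) = i) :
    zrep i = k := by
  obtain ⟨a1, a2, a3⟩ := zrep_spec i
  rw [← a3, ZMod.natCast_eq_natCast_iff'] at h
  rcases h2.eq_or_lt with rfl | h2
  · rcases a2.eq_or_lt with a2 | a2
    · exact a2
    · rw [Nat.mod_self, Nat.mod_eq_of_lt a2] at h; omega
  · rcases a2.eq_or_lt with a2 | a2
    · rw [a2, Nat.mod_self, Nat.mod_eq_of_lt h2] at h; omega
    · rw [Nat.mod_eq_of_lt h2, Nat.mod_eq_of_lt a2] at h; omega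

end aux13

theorem statement13
    (m s n : ℕ) (hm : 3 ≤ m) (hmo : Odd m) (hs : 0 < s) (hso : Odd s) (hn : n = s * m)
    (σ₁ σ₂ ρ : Equiv.Perm (ZMod n × ZMod m))
    (hσ₁ : ∀ (i : ZMod n) (j : ZMod m),
      σ₁ (i, j) = if i = 0 then (i + 1, 1 - j) else (i + 1, j))
    (hσ₂ : ∀ (i : ZMod n) (j : ZMod m),
      σ₂ (i, j) = if i = 1 then (2 - i, 2 - j)
        else (2 - i, j + (-1 : ZMod m) ^ (zrep i - 1) * ((2 * zrep i - 3 : ℕ) : ZMod m)))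
    (hρ : ∀ (i : ZMod n) (j : ZMod m),
      ρ (i, j) = if i = 1 then (2 - i, j) else (2 - i, 1 - j))
    :
    Nat.card (Subgroup.closure {ρ * σ₂ * σ₁, σ₂} : Subgroup (Equiv.Perm (ZMod n × ZMod m))) = 2 * m ^ 2 * n ∧
      (∀ u₁ w₁ u₂ w₂ : ZMod n × ZMod m,
        (lexCycle n m).Adj u₁ w₁ → (lexCycle n m).Adj u₂ w₂ →
        ∃ g ∈ Subgroup.closure {ρ * σ₂ * σ₁, σ₂}, g u₁ = u₂ ∧ g w₁ = w₂) ∧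
      (∀ u w : ZMod n × ZMod m, (lexCycle n m).Adj u w →
        ∀ g ∈ Subgroup.closure {ρ * σ₂ * σ₁, σ₂}, g u = u → g w = w → g = 1) := by
  have hn3 : 3 ≤ n := by rw [hn]; nlinarith
  have hno : Odd n := by rw [hn]; exact hso.mul hmo
  have hdvd : m ∣ n := ⟨s, by rw [hn]; ring⟩
  haveI : NeZero n := ⟨by omega⟩
  haveI : NeZero m := ⟨by omega⟩
  have h2 : IsUnit (2 : ZMod m) := by
    have := (ZMod.isUnit_iff_coprime 2 m).2 (Nat.coprime_two_left.2 hmo)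
    exact_mod_cast this
  have h1n : (1 : ZMod n) ≠ 0 := by
    haveI : Fact (1 < n) := ⟨by omega⟩
    exact one_ne_zero
  have h2n : (2 : ZMod n) ≠ 0 := by
    intro h
    have : ((2 : ℕ) : ZMod n) = 0 := by exact_mod_cast h
    rw [ZMod.natCast_eq_zero_iff] at this
    have := Nat.le_of_dvd (by norm_num) this
    omega
  let c : ZMod n →+* ZMod m := ZMod.castHom hdvd (ZMod m)
  have hc : ∀ i : ZMod n, c i = (zrep i : ZMod m) := by
    intro i
    conv_lhs => rw [← (zrep_spec i).2.2]
    simp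
  have z0 : zrep (0 : ZMod n) = n := zrep_eq _ _ (by omega) le_rfl (by simp)
  have z1 : zrep (1 : ZMod n) = 1 := zrep_eq _ _ (by omega) (by omega) (by simp)
  have zs : ∀ i : ZMod n, i ≠ 0 → zrep (i + 1) = zrep i + 1 := by
    intro i hi
    obtain ⟨a1, a2, a3⟩ := zrep_spec i
    refine zrep_eq _ _ (by omega) ?_ (by push_cast; rw [a3])
    rcases a2.eq_or_lt with a2 | a2
    · rw [a2, ZMod.natCast_self] at a3
      exact absurd a3.symm hi
    · omega
  have zge : ∀ i : ZMod n, i ≠ 1 → 2 ≤ zrep i := by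
    intro i hi
    obtain ⟨a1, a2, a3⟩ := zrep_spec i
    rcases a1.eq_or_lt with a1 | a1
    · rw [← a1] at a3
      exact absurd (by simpa using a3.symm) hi
    · exact a1
  have zr : ∀ i : ZMod n, i ≠ 1 → zrep (2 - i) + zrep i = n + 2 := by
    intro i hi
    obtain ⟨a1, a2, a3⟩ := zrep_spec i
    have := zge i hi
    have := zrep_eq (2 - i) (n + 2 - zrep i) (by omega) (by omega)
      (by rw [Nat.cast_sub (by omega)]; push_cast; rw [a3, ZMod.natCast_self]; ring)
    omega
  have sq : ∀ k : ℕ, ((-1 : ZMod m) ^ k) * (-1) ^ k = 1 := by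
    intro k; rw [← mul_pow]; simp
  have sr : ∀ i : ZMod n, i ≠ 1 → (-1 : ZMod m) ^ zrep (2 - i) = - (-1) ^ zrep i := by
    intro i hi
    have h : (-1 : ZMod m) ^ zrep (2 - i) * (-1) ^ zrep i = -1 := by
      rw [← pow_add, zr i hi, pow_add, hno.neg_one_pow]; simp
    linear_combination (-1) ^ zrep i * h - (-1 : ZMod m) ^ zrep (2 - i) * sq (zrep i)
  have s0 : (-1 : ZMod m) ^ n = -1 := hno.neg_one_pow
  have h21 : (2 - 1 : ZMod n) = 1 := by ring
  have p1 : ∀ v, (σ₁ v).1 = v.1 + 1 ∧ wof (σ₁ v) = - wof v := by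
    rintro ⟨i, j⟩
    rw [hσ₁]
    split_ifs with h
    · subst h
      refine ⟨rfl, ?_⟩
      simp only [wof, zero_add, z0, z1, s0]; ring
    · refine ⟨rfl, ?_⟩
      simp only [wof, zs i h]; ring
  have pρ : ∀ v, (ρ v).1 = 2 - v.1 ∧ wof (ρ v) = wof v := by
    rintro ⟨i, j⟩
    rw [hρ]
    split_ifs with h
    · subst h
      refine ⟨rfl, ?_⟩
      simp only [wof, h21]
    · refine ⟨rfl, ?_⟩
      simp only [wof, sr i h]; ring
  have p2 : IsN c σ₂ 2 (-6) 4 := by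
    rintro ⟨i, j⟩
    rw [hσ₂]
    split_ifs with h
    · subst h
      refine ⟨rfl, ?_⟩
      simp only [wof, h21, z1, map_one]; ring
    · refine ⟨rfl, ?_⟩
      have hz := zge i h
      simp only [wof, sr i h, hc]
      rw [Nat.cast_sub (by omega)]
      have hp : (-1 : ZMod m) ^ zrep i = - (-1) ^ (zrep i - 1) := by
        conv_lhs => rw [show zrep i = zrep i - 1 + 1 by omega, pow_succ]
        ring
      have hq := sq (zrep i - 1)
      rw [hp]
      push_cast
      linear_combination (4 * (zrep i : ZMod m) - 6) * hq
  have pA : IsP c (ρ * σ₂ * σ₁) 1 (-2) 4 := by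
    intro v
    rw [Equiv.Perm.mul_apply, Equiv.Perm.mul_apply, (pρ _).1, (pρ _).2, (p2 _).1, (p2 _).2,
      (p1 _).1, (p1 _).2, map_add, map_one]
    constructor <;> ring
  have hfull := full c (Subgroup.closure {ρ * σ₂ * σ₁, σ₂}) h2
    (Subgroup.subset_closure (by simp)) (Subgroup.subset_closure (by simp)) pA p2
  have hcl := closed c pA p2
  have hT := trans13 c _ h1n h2 hfull.1 hfull.2
  have hF : ∀ u w : ZMod n × ZMod m, (lexCycle n m).Adj u w →
        ∀ g ∈ Subgroup.closure {ρ * σ₂ * σ₁, σ₂}, g u = u → g w = w → g = 1 :=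
    fun u w e g hg => free13 h1n h2n h2 (hcl g hg) u w e
  exact ⟨card13 _ h1n h2n (fun g hg => adj13 h1n (hcl g hg)) hT hF, hT, hF⟩
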